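/- arXiv:2203.12345 — 4 statements merged into one kernel-verified Lean document; each statement's English description precedes it below -/
import Mathlib

section
/- Let x be a surface patch with a rounded corner at (0,0). Then x is normal continuous at (0,0) with limit normal n: there exists H' ∈ (0,H] such that x_u(u,v) × x_v(u,v) ≠ 0 for all (u,v) ∈ [0,H']² \ {(0,0)}, and for every ε > 0 there exists δ > 0 such that for all (u,v) ∈ [0,H']² \ {(0,0)} with max{u,v} < δ, the unit normal ν(u,v) = (x_u(u,v) × x_v(u,v))/‖x_u(u,v) × x_v(u,v)‖ satisfies ‖ν(u,v) − n‖ < ε. -/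
/-!
Write `F = x_u × x_v`, `a = t × r`, `b = t × s`. Antiparallelism gives `F(0,0) = 0`, and the product
rule together with `x_uv = x_vu` shows that the derivative of `F` at the origin is
`(u, v) ↦ u a + v b` (`hasFDerivAt_cross_partials`). By coplanarity and onesidedness `b = c a` for
some `c > 0` (`exists_pos_smul`), so `F(u,v) = (u + c v) a + o(max(u,v))`. On the punctured
quadrant the weight `u + c v` is positive and dominates a multiple of `max(u,v)`, hence
`F / (u + c v) → a ≠ 0` (`tendsto_weighted`). Normalizing cancels the positive weight, so
`F / ‖F‖ → a / ‖a‖ = n`, and `F` does not vanish near the corner.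
-/

open scoped RealInnerProductSpace

noncomputable section

/-- ℝ³ with the Euclidean inner product and norm. -/
abbrev E3 : Type := EuclideanSpace ℝ (Fin 3)

/-- The cross product on Euclidean ℝ³. -/
def cross3 (a b : E3) : E3 :=
  (WithLp.equiv 2 (Fin 3 → ℝ)).symm
    (crossProduct ((WithLp.equiv 2 (Fin 3 → ℝ)) a) ((WithLp.equiv 2 (Fin 3 → ℝ)) b))

/-- Partial derivative with respect to the first variable. -/
def pd1 (x : ℝ × ℝ → E3) (p : ℝ × ℝ) : E3 := fderiv ℝ x p (1, 0)

/-- Partial derivative with respect to the second variable. -/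
def pd2 (x : ℝ × ℝ → E3) (p : ℝ × ℝ) : E3 := fderiv ℝ x p (0, 1)

open Filter Topology Asymptotics

/-- The cross product on `E3` as a continuous bilinear map. -/
def crossL : E3 →L[ℝ] E3 →L[ℝ] E3 :=
  LinearMap.toContinuousLinearMap
    ((LinearMap.toContinuousLinearMap (𝕜 := ℝ) (E := E3) (F' := E3)).toLinearMap.comp
      (LinearMap.mk₂ ℝ cross3
        (fun a b c => by ext i; simp [cross3])
        (fun k a b => by ext i; simp [cross3])
        (fun a b c => by ext i; simp [cross3])
        (fun k a b => by ext i; simp [cross3])))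

lemma crossL_apply (a b : E3) : crossL a b = cross3 a b := rfl

lemma cross3_add_right (a b c : E3) : cross3 a (b + c) = cross3 a b + cross3 a c :=
  map_add (crossL a) b c

lemma cross3_smul_right (k : ℝ) (a b : E3) : cross3 a (k • b) = k • cross3 a b :=
  map_smul (crossL a) k b

lemma cross3_smul_left (k : ℝ) (a b : E3) : cross3 (k • a) b = k • cross3 a b :=
  LinearMap.map_smul₂ crossL.toLinearMap₁₂ k a b

lemma cross3_neg_right (a b : E3) : cross3 a (-b) = -cross3 a b :=
  map_neg (crossL a) b

lemma cross3_self (a : E3) : cross3 a a = 0 := by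
  simp [cross3]

lemma cross3_anticomm (a b : E3) : cross3 a b = -cross3 b a := by
  unfold cross3
  rw [← cross_anticomm]
  rfl

/-- Mixed partial derivatives commute. -/
lemma pd1_pd2_comm {x : ℝ × ℝ → E3} (hx : ContDiff ℝ 3 x) (p : ℝ × ℝ) :
    pd1 (pd2 x) p = pd2 (pd1 x) p := by
  have hd : DifferentiableAt ℝ (fderiv ℝ x) p :=
    ((hx.fderiv_right (m := 2) (by norm_num)).differentiable (by norm_num)) p
  have hsymm : IsSymmSndFDerivAt ℝ x p :=
    hx.contDiffAt.isSymmSndFDerivAt (by simp; norm_num)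
  have key : ∀ d e : ℝ × ℝ, fderiv ℝ (fun q => fderiv ℝ x q d) p e
      = fderiv ℝ (fderiv ℝ x) p e d := by
    intro d e
    rw [fderiv_clm_apply hd (differentiableAt_const d)]
    simp
  unfold pd1 pd2
  rw [key, key]
  exact hsymm _ _

lemma differentiable_pd1 {x : ℝ × ℝ → E3} (hx : ContDiff ℝ 3 x) : Differentiable ℝ (pd1 x) :=
  ((hx.fderiv_right (m := 2) (by norm_num)).differentiable (by norm_num)).clm_apply
    (differentiable_const _)

lemma differentiable_pd2 {x : ℝ × ℝ → E3} (hx : ContDiff ℝ 3 x) : Differentiable ℝ (pd2 x) :=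
  ((hx.fderiv_right (m := 2) (by norm_num)).differentiable (by norm_num)).clm_apply
    (differentiable_const _)

lemma fderiv_apply_eq (y : ℝ × ℝ → E3) (p q : ℝ × ℝ) :
    fderiv ℝ y p q = q.1 • pd1 y p + q.2 • pd2 y p := by
  unfold pd1 pd2
  rw [← map_smul, ← map_smul, ← map_add]
  simp

/-- At a point where `x_u = λ t` and `x_v = -μ t`, the derivative of `x_u × x_v` is
`(u, v) ↦ u (t × r) + v (t × s)`. -/
lemma hasFDerivAt_cross_partials {x : ℝ × ℝ → E3} (hx : ContDiff ℝ 3 x) {t : E3} {lam mu : ℝ}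
    (hxi10 : pd1 x (0, 0) = lam • t) (hxi01 : pd2 x (0, 0) = -(mu • t)) :
    ∃ L : ℝ × ℝ →L[ℝ] E3,
      HasFDerivAt (fun p => cross3 (pd1 x p) (pd2 x p)) L (0, 0) ∧
      ∀ q, L q = q.1 • cross3 t (mu • pd1 (pd1 x) (0, 0) + lam • pd2 (pd1 x) (0, 0))
        + q.2 • cross3 t (lam • pd2 (pd2 x) (0, 0) + mu • pd2 (pd1 x) (0, 0)) := by
  refine ⟨_, crossL.hasFDerivAt_of_bilinear (differentiable_pd1 hx (0, 0)).hasFDerivAt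
    (differentiable_pd2 hx (0, 0)).hasFDerivAt, fun q => ?_⟩
  have hL : ∀ d : E3, cross3 d (-(mu • t)) = mu • cross3 t d := by
    intro d
    rw [cross3_neg_right, cross3_smul_right, cross3_anticomm d t, smul_neg, neg_neg]
  simp only [_root_.add_apply, ContinuousLinearMap.precompR_apply, ContinuousLinearMap.compL_apply,
    ContinuousLinearMap.comp_apply,
    ContinuousLinearMap.precompL_apply, crossL_apply, hxi10, hxi01, hL, fderiv_apply_eq,
    pd1_pd2_comm hx, cross3_add_right, cross3_smul_right, cross3_smul_left]
  module

/-- Coplanarity and onesidedness force `t × s` to be a positive multiple of `t × r`. -/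
lemma exists_pos_smul {r s t : E3} (ht : t ≠ 0) (hcop : ¬ LinearIndependent ℝ ![r, s, t])
    (hone : 0 < ⟪cross3 t r, cross3 t s⟫) :
    ∃ c : ℝ, 0 < c ∧ cross3 t s = c • cross3 t r := by
  rw [Fintype.not_linearIndependent_iff] at hcop
  obtain ⟨g, hg, i, hi⟩ := hcop
  simp only [Fin.sum_univ_three, Matrix.cons_val] at hg
  have ha : cross3 t r ≠ 0 := by
    intro h
    simp [h] at hone
  have hrel : g 0 • cross3 t r + g 1 • cross3 t s = 0 := by
    have := congrArg (cross3 t) hg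
    simpa [cross3_add_right, cross3_smul_right, cross3_self, -smul_eq_zero,
      show cross3 t 0 = 0 from map_zero (crossL t)] using this
  have h1 : g 1 ≠ 0 := by
    intro h1
    have h0 : g 0 = 0 := by simpa [h1, ha] using hrel
    have h2 : g 2 = 0 := by simpa [h0, h1, ht] using hg
    fin_cases i <;> simp_all
  have hb : cross3 t s = (-(g 0 / g 1)) • cross3 t r := by
    have : g 1 • cross3 t s = g 1 • ((-(g 0 / g 1)) • cross3 t r) := by
      rw [smul_smul, eq_neg_of_add_eq_zero_right hrel, ← neg_smul]
      congr 1
      field_simp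
    exact smul_right_injective _ h1 this
  refine ⟨_, ?_, hb⟩
  rw [hb, inner_smul_right] at hone
  exact pos_of_mul_pos_left hone real_inner_self_nonneg

/-- The closed first quadrant without its vertex. -/
def puncturedQuadrant : Set (ℝ × ℝ) := {p | 0 ≤ p.1 ∧ 0 ≤ p.2 ∧ p ≠ (0, 0)}

lemma weight_pos {c : ℝ} (hc : 0 < c) {p : ℝ × ℝ} (hp : p ∈ puncturedQuadrant) :
    0 < p.1 + c * p.2 := by
  obtain ⟨h1, h2, h3⟩ := hp
  rcases h1.lt_or_eq with h | h
  · positivity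
  · rcases h2.lt_or_eq with h' | h'
    · positivity
    · exact absurd (Prod.ext h.symm h'.symm) h3

/-- If `F` vanishes at the vertex and has derivative `(u, v) ↦ (u + c v) a` there with `c > 0`, then
`F / (u + c v)` tends to `a` along the punctured quadrant. -/
lemma tendsto_weighted {F : ℝ × ℝ → E3} {L : ℝ × ℝ →L[ℝ] E3} {c : ℝ} (hc : 0 < c) {a : E3}
    (hF : HasFDerivAt F L (0, 0)) (hF0 : F (0, 0) = 0) (hL : ∀ q, L q = (q.1 + c * q.2) • a) :
    Tendsto (fun p => (p.1 + c * p.2)⁻¹ • F p) (𝓝[puncturedQuadrant] (0, 0)) (𝓝 a) := by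
  have ho := hF.isLittleO.mono (nhdsWithin_le_nhds (s := puncturedQuadrant))
  -- The weight dominates the sup norm on the quadrant.
  have hO : (fun p : ℝ × ℝ => p - (0, 0)) =O[𝓝[puncturedQuadrant] (0, 0)]
      fun p => p.1 + c * p.2 := by
    refine IsBigO.of_bound (1 + c⁻¹) ?_
    filter_upwards [self_mem_nhdsWithin] with p hp
    have hw := weight_pos hc hp
    obtain ⟨h1, h2, -⟩ := hp
    rw [Prod.mk_zero_zero, sub_zero, Prod.norm_def, Real.norm_of_nonneg h1, Real.norm_of_nonneg h2,
      Real.norm_of_nonneg hw.le]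
    have hexp : (1 + c⁻¹) * (p.1 + c * p.2) = p.1 + p.2 + c * p.2 + c⁻¹ * p.1 := by
      field_simp
      ring
    have h3 : 0 ≤ c * p.2 := by positivity
    have h4 : 0 ≤ c⁻¹ * p.1 := by positivity
    rw [hexp]
    exact max_le (by linarith) (by linarith)
  have hlim := (ho.trans_isBigO hO).tendsto_inv_smul_nhds_zero.add_const a
  rw [zero_add] at hlim
  refine hlim.congr' ?_
  filter_upwards [self_mem_nhdsWithin] with p hp
  have hw := (weight_pos hc hp).ne'
  rw [hF0, hL, smul_sub, smul_sub]
  simp only [Prod.fst_sub, Prod.snd_sub, sub_zero, smul_smul, inv_mul_cancel₀ hw, one_smul,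
    smul_zero, sub_add_cancel]

/-- On the quadrant, balls for the product metric are the squares `max u v < δ`. -/
lemma exists_pos_of_eventually {P : ℝ × ℝ → Prop}
    (h : ∀ᶠ p in 𝓝[puncturedQuadrant] (0, 0), P p) :
    ∃ δ : ℝ, 0 < δ ∧ ∀ u v : ℝ, 0 ≤ u → 0 ≤ v → (u, v) ≠ (0, 0) → max u v < δ → P (u, v) := by
  obtain ⟨δ, hδ, h⟩ := Metric.eventually_nhds_iff.1 (eventually_nhdsWithin_iff.1 h)
  refine ⟨δ, hδ, fun u v hu hv hne hlt => h ?_ ⟨hu, hv, hne⟩⟩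
  rw [Prod.dist_eq, Real.dist_0_eq_abs, Real.dist_0_eq_abs, abs_of_nonneg hu, abs_of_nonneg hv]
  exact hlt

/-- **Normal continuity at a rounded corner.**
If the surface patch `x : [0,H]² → ℝ³` has a rounded corner at `(0,0)`
(antiparallelism, coplanarity and onesidedness of the Taylor coefficients),
then `x` is normal continuous at `(0,0)` with limit normal `n = (t × r)/‖t × r‖`:
on a sufficiently small square `[0,H']²` the cross product `x_u × x_v` does not
vanish away from the origin, and the unit normal `ν = (x_u × x_v)/‖x_u × x_v‖`
tends to `n` as `(u,v) → (0,0)`. -/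
theorem rounded_corner_normal_continuity
    (H : ℝ) (hH : 0 < H) (x : ℝ × ℝ → E3) (hx : ContDiff ℝ 3 x)
    (t : E3) (ht : ‖t‖ = 1) (lam mu : ℝ) (hlam : 0 < lam) (hmu : 0 < mu)
    (hxi10 : pd1 x (0, 0) = lam • t)
    (hxi01 : pd2 x (0, 0) = -(mu • t))
    (r s : E3)
    (hr : r = mu • pd1 (pd1 x) (0, 0) + lam • pd2 (pd1 x) (0, 0))
    (hs : s = lam • pd2 (pd2 x) (0, 0) + mu • pd2 (pd1 x) (0, 0))
    (hcop : ¬ LinearIndependent ℝ ![r, s, t])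
    (hone : 0 < ⟪cross3 t r, cross3 t s⟫)
    (n : E3) (hn : n = ‖cross3 t r‖⁻¹ • cross3 t r) :
    ∃ H' : ℝ, H' ∈ Set.Ioc 0 H ∧
      (∀ u v : ℝ, u ∈ Set.Icc (0 : ℝ) H' → v ∈ Set.Icc (0 : ℝ) H' → (u, v) ≠ (0, 0) →
        cross3 (pd1 x (u, v)) (pd2 x (u, v)) ≠ 0) ∧
      (∀ ε : ℝ, 0 < ε → ∃ δ : ℝ, 0 < δ ∧
        ∀ u v : ℝ, u ∈ Set.Icc (0 : ℝ) H' → v ∈ Set.Icc (0 : ℝ) H' → (u, v) ≠ (0, 0) →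
          max u v < δ →
          ‖‖cross3 (pd1 x (u, v)) (pd2 x (u, v))‖⁻¹ • cross3 (pd1 x (u, v)) (pd2 x (u, v))
            - n‖ < ε) := by
  subst hr hs
  obtain ⟨L, hL, hLq⟩ := hasFDerivAt_cross_partials hx hxi10 hxi01
  have ht0 : t ≠ 0 := by
    rintro rfl
    simp at ht
  obtain ⟨c, hc, hb⟩ := exists_pos_smul ht0 hcop hone
  rw [hb] at hLq hone
  set a := cross3 t (mu • pd1 (pd1 x) (0, 0) + lam • pd2 (pd1 x) (0, 0)) with ha_def
  have ha : a ≠ 0 := by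
    intro h
    simp [h] at hone
  have hF0 : cross3 (pd1 x (0, 0)) (pd2 x (0, 0)) = 0 := by
    rw [hxi10, hxi01, cross3_neg_right, cross3_smul_right, cross3_smul_left, cross3_self]
    simp
  have hlim := tendsto_weighted hc hL hF0 (a := a) fun q => by
    rw [hLq, smul_smul, ← add_smul, mul_comm c]
  -- Normalization cancels the positive weight.
  have hnormal : Tendsto (fun p => ‖cross3 (pd1 x p) (pd2 x p)‖⁻¹ • cross3 (pd1 x p) (pd2 x p))
      (𝓝[puncturedQuadrant] (0, 0)) (𝓝 n) := by
    rw [hn]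
    refine ((hlim.norm.inv₀ (norm_ne_zero_iff.2 ha)).smul hlim).congr' ?_
    filter_upwards [self_mem_nhdsWithin] with p hp
    have hw := weight_pos hc hp
    rw [norm_smul, norm_inv, Real.norm_of_nonneg hw.le, smul_smul, mul_inv, inv_inv]
    congr 1
    field_simp
  have hne : ∀ᶠ p in 𝓝[puncturedQuadrant] (0, 0), cross3 (pd1 x p) (pd2 x p) ≠ 0 := by
    filter_upwards [hlim.eventually_ne ha] with p hp h
    exact hp (by rw [h, smul_zero])
  obtain ⟨δ₀, hδ₀, hδ₀'⟩ := exists_pos_of_eventually hne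
  refine ⟨min H (δ₀ / 2), ⟨lt_min hH (half_pos hδ₀), min_le_left _ _⟩, ?_, ?_⟩
  · intro u v hu hv huv
    have hlt : min H (δ₀ / 2) < δ₀ := (min_le_right _ _).trans_lt (half_lt_self hδ₀)
    exact hδ₀' u v hu.1 hv.1 huv ((max_le hu.2 hv.2).trans_lt hlt)
  · intro ε hε
    obtain ⟨δ, hδ, h⟩ := exists_pos_of_eventually (Metric.tendsto_nhds.1 hnormal ε hε)
    refine ⟨δ, hδ, fun u v hu hv huv hlt => ?_⟩
    rw [← dist_eq_norm]
    exact h u v hu.1 hv.1 huv hlt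
end
end

section
/- Let x : [0,H]² → ℝ³ be a three times continuously differentiable surface patch whose first partial derivatives at the origin are antiparallel (ξ_{1,0} = λt, ξ_{0,1} = −μt for a unit vector t and λ, μ > 0). If the vectors r, s, t are linearly independent, then the unit normal ν has two distinct directional limits along the two boundary edges: ν(u,0) → (t × r)/‖t × r‖ as u → 0⁺ and ν(0,v) → (t × s)/‖t × s‖ as v → 0⁺, and these two unit vectors are not equal; in particular ν has no limit at (0,0) and x is not normal continuous there. -/
/-!
Write `ν = N / ‖N‖` with `N = x_u × x_v`. At the origin `N` vanishes, because `x_u` and `x_v` are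
parallel there. Along the edge `v = 0`, Leibniz' rule for the bilinear cross product and the
symmetry of the second derivative give
`dN/du = λ t × ξ₁₁ + ξ₂₀ × (-μ t) = t × (μ ξ₂₀ + λ ξ₁₁) = t × r`, and in the same way
`dN/dv = t × s` along the edge `u = 0`. Since `N(u, 0) / u → t × r ≠ 0` and normalization is
continuous away from `0` and invariant under positive scaling, `ν(u, 0)` tends to the normalization
of `t × r` (`tendsto_normalize_of_hasDerivAt`).

As `t ≠ 0`, the kernel of `t × ·` is the line `ℝ t`, so `t × ·` is injective on the span of `r` and
`s` (`coeffs_eq_zero_of_cross3_eq_zero`). Hence `t × r` and `t × s` are linearly independent, their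
normalizations differ, and `ν` cannot have a limit at the origin.
-/


open scoped RealInnerProductSpace

noncomputable section

/-- The unit normal of a surface patch, `ν = (x_u × x_v)/‖x_u × x_v‖`
(junk value `0` where the cross product vanishes). -/
def unitNormal (x : ℝ × ℝ → E3) (p : ℝ × ℝ) : E3 :=
  ‖cross3 (pd1 x p) (pd2 x p)‖⁻¹ • cross3 (pd1 x p) (pd2 x p)

/-- The cross product on `E3` as a continuous bilinear map. -/
def crossCLM : E3 →L[ℝ] E3 →L[ℝ] E3 :=
  LinearMap.toContinuousBilinearMap (LinearMap.mk₂ ℝ cross3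
    (fun a b c => by simp [cross3])
    (fun k a b => by simp [cross3])
    (fun a b c => by simp [cross3])
    (fun k a b => by simp [cross3]))

lemma crossCLM_apply (a b : E3) : crossCLM a b = cross3 a b := rfl

lemma crossCLM_self (a : E3) : crossCLM a a = 0 := by
  simp [crossCLM_apply, cross3]

lemma crossCLM_anticomm (a b : E3) : crossCLM a b = -crossCLM b a := by
  simp only [crossCLM_apply, cross3]
  rw [← cross_anticomm]
  rfl

/-- If `c` vanishes at `0` with nonzero derivative `w`, then the direction of `c u` tends to the
direction of `w` as `u → 0⁺`. -/
lemma tendsto_normalize_of_hasDerivAt {c : ℝ → E3} {w : E3} (hc : HasDerivAt c w 0)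
    (h0 : c 0 = 0) (hw : w ≠ 0) :
    Filter.Tendsto (fun u => ‖c u‖⁻¹ • c u) (nhdsWithin 0 (Set.Ioi 0)) (nhds (‖w‖⁻¹ • w)) := by
  have h1 : Filter.Tendsto (fun u : ℝ => u⁻¹ • c u) (nhdsWithin 0 (Set.Ioi 0)) (nhds w) := by
    simpa [h0] using hc.tendsto_slope_zero_right
  have h2 := (h1.norm.inv₀ (norm_ne_zero_iff.mpr hw)).smul h1
  refine h2.congr' ?_
  filter_upwards [self_mem_nhdsWithin] with u hu
  have hu : 0 < u := hu
  rw [norm_smul, norm_inv, Real.norm_of_nonneg hu.le, mul_inv, inv_inv, smul_smul]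
  congr 1
  field_simp

/-- Limit of the normalized cross product of two vector fields along a curve which are the
multiples `λ t` and `-μ t` of one vector `t` at its initial point: the first-order term is
`λ t × b' - μ a' × t = t × (μ a' + λ b')`. -/
lemma tendsto_normalize_cross {a b : ℝ → E3} {a' b' t w : E3} {lam mu : ℝ}
    (ha : HasDerivAt a a' 0) (hb : HasDerivAt b b' 0)
    (ha0 : a 0 = lam • t) (hb0 : b 0 = -(mu • t))
    (hw : w = mu • a' + lam • b') (hne : cross3 t w ≠ 0) :
    Filter.Tendsto (fun u => ‖cross3 (a u) (b u)‖⁻¹ • cross3 (a u) (b u))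
      (nhdsWithin 0 (Set.Ioi 0)) (nhds (‖cross3 t w‖⁻¹ • cross3 t w)) := by
  refine tendsto_normalize_of_hasDerivAt (c := fun u => cross3 (a u) (b u)) ?_ ?_ hne
  · have h := crossCLM.hasDerivAt_of_bilinear (fun _ => ha) (fun _ => hb)
    have e : cross3 t w = crossCLM (a 0) b' + crossCLM a' (b 0) := by
      rw [← crossCLM_apply, hw, ha0, hb0, crossCLM_anticomm a']
      simp [add_comm]
    rw [e]
    exact h
  · simp only [ha0, hb0, ← crossCLM_apply]
    simp [crossCLM_self]

/-- `t × ·` is injective on the span of `r` and `s` when `r, s, t` are linearly independent. -/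
lemma coeffs_eq_zero_of_cross3_eq_zero {r s t : E3} (h : LinearIndependent ℝ ![r, s, t])
    {α β : ℝ} (h0 : cross3 t (α • r + β • s) = 0) : α = 0 ∧ β = 0 := by
  have ht : t ≠ 0 := h.ne_zero 2
  have h1 : ¬ LinearIndependent ℝ ![(WithLp.equiv 2 (Fin 3 → ℝ)) t,
      (WithLp.equiv 2 (Fin 3 → ℝ)) (α • r + β • s)] := by
    rw [← crossProduct_ne_zero_iff_linearIndependent, not_not]
    exact (WithLp.equiv 2 (Fin 3 → ℝ)).symm.injective h0
  rw [LinearIndependent.pair_iff' (fun h => ht ((WithLp.equiv 2 (Fin 3 → ℝ)).injective h))] at h1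
  push Not at h1
  obtain ⟨γ, hγ⟩ := h1
  have hγ' : γ • t = α • r + β • s := (WithLp.equiv 2 (Fin 3 → ℝ)).injective hγ
  have h2 := Fintype.linearIndependent_iff.mp h ![α, β, -γ]
    (by simp [Fin.sum_univ_three, hγ'])
  exact ⟨h2 0, h2 1⟩

/-- **Normal discontinuity, linearly independent case.**
If the first partial derivatives of `x` at the origin are antiparallel and the
vectors `r, s, t` are linearly independent, then the unit normal `ν` has the two
directional limits `(t × r)/‖t × r‖` along the edge `v = 0` and `(t × s)/‖t × s‖`
along the edge `u = 0`; these two limits are distinct, and consequently `ν` has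
no limit at `(0,0)`, i.e. `x` is not normal continuous there. -/
theorem antiparallel_indep_normal_discontinuity
    (H : ℝ) (hH : 0 < H) (x : ℝ × ℝ → E3) (hx : ContDiff ℝ 3 x)
    (t : E3) (ht : ‖t‖ = 1) (lam mu : ℝ) (hlam : 0 < lam) (hmu : 0 < mu)
    (hxi10 : pd1 x (0, 0) = lam • t)
    (hxi01 : pd2 x (0, 0) = -(mu • t))
    (r s : E3)
    (hr : r = mu • pd1 (pd1 x) (0, 0) + lam • pd2 (pd1 x) (0, 0))
    (hs : s = lam • pd2 (pd2 x) (0, 0) + mu • pd2 (pd1 x) (0, 0))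
    (hindep : LinearIndependent ℝ ![r, s, t]) :
    Filter.Tendsto (fun u : ℝ => unitNormal x (u, 0)) (nhdsWithin 0 (Set.Ioi 0))
      (nhds (‖cross3 t r‖⁻¹ • cross3 t r)) ∧
    Filter.Tendsto (fun v : ℝ => unitNormal x (0, v)) (nhdsWithin 0 (Set.Ioi 0))
      (nhds (‖cross3 t s‖⁻¹ • cross3 t s)) ∧
    ‖cross3 t r‖⁻¹ • cross3 t r ≠ ‖cross3 t s‖⁻¹ • cross3 t s ∧
    ¬ ∃ L : E3, Filter.Tendsto (unitNormal x)
        (nhdsWithin (0, 0) ((Set.Icc (0 : ℝ) H ×ˢ Set.Icc (0 : ℝ) H) \ {(0, 0)}))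
        (nhds L) := by
  have hne : ∀ α β : ℝ, α ≠ 0 ∨ β ≠ 0 → cross3 t (α • r + β • s) ≠ 0 := by
    intro α β hαβ h0
    have := coeffs_eq_zero_of_cross3_eq_zero hindep h0
    tauto
  have hner : cross3 t r ≠ 0 := by simpa using hne 1 0 (by simp)
  have hnes : cross3 t s ≠ 0 := by simpa using hne 0 1 (by simp)
  have hD : DifferentiableAt ℝ (fderiv ℝ x) (0, 0) :=
    ((hx.fderiv_right (m := 2) (by norm_num)).differentiable (by norm_num)) _
  have hsnd : ∀ e : ℝ × ℝ, HasFDerivAt (fun p => fderiv ℝ x p e)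
      ((fderiv ℝ (fderiv ℝ x) (0, 0)).flip e) (0, 0) := by
    intro e
    simpa using hD.hasFDerivAt.clm_apply (hasFDerivAt_const e ((0 : ℝ), (0 : ℝ)))
  have h1 : HasFDerivAt (pd1 x) _ (0, 0) := hsnd (1, 0)
  have h2 : HasFDerivAt (pd2 x) _ (0, 0) := hsnd (0, 1)
  have hsymm : fderiv ℝ (pd1 x) (0, 0) (0, 1) = fderiv ℝ (pd2 x) (0, 0) (1, 0) := by
    rw [h1.fderiv, h2.fderiv]
    exact (hx.contDiffAt.isSymmSndFDerivAt (by simp; norm_num)).eq _ _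
  have hcu : HasDerivAt (fun u : ℝ => (u, (0 : ℝ))) (1, 0) 0 :=
    (hasDerivAt_id (0 : ℝ)).prodMk (hasDerivAt_const _ _)
  have hcv : HasDerivAt (fun v : ℝ => ((0 : ℝ), v)) (0, 1) 0 :=
    (hasDerivAt_const _ _).prodMk (hasDerivAt_id (0 : ℝ))
  have d1 := h1.differentiableAt.hasFDerivAt
  have d2 := h2.differentiableAt.hasFDerivAt
  have hlu : Filter.Tendsto (fun u : ℝ => unitNormal x (u, 0)) (nhdsWithin 0 (Set.Ioi 0))
      (nhds (‖cross3 t r‖⁻¹ • cross3 t r)) :=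
    tendsto_normalize_cross (a := fun u => pd1 x (u, 0)) (b := fun u => pd2 x (u, 0))
      (d1.comp_hasDerivAt (f := fun u : ℝ => (u, (0 : ℝ))) 0 hcu)
      (d2.comp_hasDerivAt (f := fun u : ℝ => (u, (0 : ℝ))) 0 hcu) hxi10 hxi01
      (by rw [hr, ← hsymm]; rfl) hner
  have hlv : Filter.Tendsto (fun v : ℝ => unitNormal x (0, v)) (nhdsWithin 0 (Set.Ioi 0))
      (nhds (‖cross3 t s‖⁻¹ • cross3 t s)) :=
    tendsto_normalize_cross (a := fun v => pd1 x (0, v)) (b := fun v => pd2 x (0, v))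
      (d1.comp_hasDerivAt (0 : ℝ) hcv) (d2.comp_hasDerivAt (0 : ℝ) hcv) hxi10 hxi01
      (by rw [hs, add_comm]; rfl) hnes
  have hdist : ‖cross3 t r‖⁻¹ • cross3 t r ≠ ‖cross3 t s‖⁻¹ • cross3 t s := by
    intro h
    refine hne ‖cross3 t r‖⁻¹ (-‖cross3 t s‖⁻¹)
      (Or.inl (inv_ne_zero (norm_ne_zero_iff.mpr hner))) ?_
    rw [← crossCLM_apply, map_add, map_smul, map_smul, crossCLM_apply, crossCLM_apply, h]
    simp
  refine ⟨hlu, hlv, hdist, ?_⟩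
  rintro ⟨L, hL⟩
  have hsmall : ∀ᶠ u : ℝ in nhdsWithin 0 (Set.Ioi 0), u ∈ Set.Ioc 0 H := Ioc_mem_nhdsGT hH
  have eu : Filter.Tendsto (fun u : ℝ => (u, (0 : ℝ))) (nhdsWithin 0 (Set.Ioi 0))
      (nhdsWithin (0, 0) ((Set.Icc (0 : ℝ) H ×ˢ Set.Icc (0 : ℝ) H) \ {(0, 0)})) := by
    refine tendsto_nhdsWithin_iff.mpr ⟨hcu.continuousAt.tendsto.mono_left inf_le_left, ?_⟩
    filter_upwards [hsmall] with u hu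
    simp [hu.1.le, hu.2, hH.le, hu.1]
  have ev : Filter.Tendsto (fun v : ℝ => ((0 : ℝ), v)) (nhdsWithin 0 (Set.Ioi 0))
      (nhdsWithin (0, 0) ((Set.Icc (0 : ℝ) H ×ˢ Set.Icc (0 : ℝ) H) \ {(0, 0)})) := by
    refine tendsto_nhdsWithin_iff.mpr ⟨hcv.continuousAt.tendsto.mono_left inf_le_left, ?_⟩
    filter_upwards [hsmall] with v hv
    simp [hv.1.le, hv.2, hH.le, hv.1]
  exact hdist ((tendsto_nhds_unique hlu (hL.comp eu)).trans
    (tendsto_nhds_unique hlv (hL.comp ev)).symm)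
end
end

section
/- Let x be a surface patch with a rounded corner at (0,0), with limit normal n. Then there exists H' ∈ (0,H] such that the orthogonal projection of x − x(0,0) to the limit tangent space, i.e. the map Π : [0,H']² → ℝ³ defined by Π(η) := (Id − n nᵀ)(x(η) − x(0,0)), is injective. -/
/-!
Put `e = r - ⟪t, r⟫ t`, so that `t` and `e` are both orthogonal to `n`. If two points `p`, `q` have
the same projection, then `Δ = x q - x p` is a multiple of `n` and hence `⟪t, Δ⟫ = ⟪e, Δ⟫ = 0`; this
is shown to force `q = p` near the corner.

Let `d = q - p`, let `M` be the larger of the norms of `p` and `q`, and `B` the second derivative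
at the origin. To first order `⟪t, Δ⟫ = lam d₁ - mu d₂`, so `⟪t, Δ⟫ = 0` makes `d` a multiple
`k (mu, lam)` up to an error `o(‖d‖)`. As `e` is orthogonal to the image of the first derivative at
the origin, `⟪e, Δ⟫` is `½ ⟪e, B (p + q) d⟫` up to `o(M ‖d‖)` (`second_order_difference`), that is,
`k` times `½ ⟪e, B (p + q) (mu, lam)⟫ = ½ ((p₁ + q₁) ⟪e, r⟫ + (p₂ + q₂) ⟪e, s⟫)` up to `o(M ‖d‖)`.
By the Lagrange identity (`inner_cross3`) `⟪e, r⟫ = ‖t × r‖²` and `⟪e, s⟫ = ⟪t × r, t × s⟫`, both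
positive, so in the closed quadrant this quantity is at least a constant times `M`. As `|k|` is
comparable to `‖d‖`, the main term dominates the errors (`eq_zero_of_estimates`).
-/

open scoped RealInnerProductSpace

noncomputable section

/-! ### Second-order expansion at the origin -/

/-- Quantitative second-order expansion of a difference: the quadratic Taylor remainder has
derivative `o(‖z‖)`, so the mean value inequality on a ball of radius `M` bounds its increments
by `ε M ‖q - p‖`. -/
lemma second_order_difference (x : ℝ × ℝ → E3) (hx : ContDiff ℝ 3 x) (ε : ℝ) (hε : 0 < ε) :
    ∃ δ > 0, ∀ M ≤ δ, ∀ p q : ℝ × ℝ, ‖p‖ ≤ M → ‖q‖ ≤ M →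
      ‖x q - x p - fderiv ℝ x 0 (q - p)
        - (1 / 2 : ℝ) • fderiv ℝ (fderiv ℝ x) 0 (p + q) (q - p)‖ ≤ ε * M * ‖q - p‖ := by
  set B := fderiv ℝ (fderiv ℝ x) 0 with hB
  set L := fderiv ℝ x 0 with hL
  have hsymm : ∀ v w, B v w = B w v := by
    have h : IsSymmSndFDerivAt ℝ x 0 := hx.contDiffAt.isSymmSndFDerivAt (by simp; norm_cast)
    exact fun v w => h v w
  have hd2 : HasFDerivAt (fderiv ℝ x) B 0 :=
    ((hx.fderiv_right (m := 2) (by norm_num)).differentiable (by norm_num) 0).hasFDerivAt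
  obtain ⟨δ, hδ, hball⟩ := Metric.eventually_nhds_iff.1 (hd2.isLittleO.def hε)
  refine ⟨δ / 2, by positivity, fun M hM p q hp hq => ?_⟩
  have hder : ∀ z, HasFDerivAt (fun z => x z - L z - (1 / 2 : ℝ) • B z z)
      (fderiv ℝ x z - L - B z) z := by
    intro z
    have h1 : HasFDerivAt x (fderiv ℝ x z) z := (hx.differentiable (by norm_num) z).hasFDerivAt
    have h2 := (B.hasFDerivAt (x := z)).clm_apply (hasFDerivAt_id z)
    refine ((h1.sub L.hasFDerivAt).sub (h2.const_smul (1 / 2 : ℝ))).congr_fderiv ?_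
    refine ContinuousLinearMap.ext fun w => ?_
    simp only [sub_apply, smul_apply,
      add_apply, ContinuousLinearMap.comp_apply,
      ContinuousLinearMap.flip_apply, id, ContinuousLinearMap.id_apply, hsymm w z]
    module
  have hmv := (convex_closedBall (0 : ℝ × ℝ) M).norm_image_sub_le_of_norm_hasFDerivWithin_le
    (f := fun z => x z - L z - (1 / 2 : ℝ) • B z z) (f' := fun z => fderiv ℝ x z - L - B z)
    (C := ε * M) (fun z _ => (hder z).hasFDerivWithinAt) (fun z hz => by
      have hz' : ‖z‖ ≤ M := by simpa using hz
      have := hball (y := z) (by simp; linarith)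
      simp only [sub_zero] at this
      exact this.trans (by gcongr))
    (by simpa using hp) (by simpa using hq)
  refine le_of_eq_of_le (congrArg _ ?_) hmv
  simp only [map_add, map_sub, add_apply, hsymm q p]
  module

/-! ### Comparison of the error terms -/

/-- The final comparison of sizes. Here `d` is the difference of two points of the square and
`lam * d.1 - mu * d.2` is the `t`-coefficient of the first derivative applied to `d`; it vanishes
along `(mu, lam)`. The hypothesis `h0` expands the vanishing `e`-component of the difference of the
images in the orthogonal basis `(mu, lam)`, `(lam, -mu)`: `G` and `G'` are the values of the
second-order term on these two vectors and `R` is the remainder. -/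
lemma eq_zero_of_estimates {lam mu c C ε M G G' R : ℝ} {d : ℝ × ℝ}
    (hlam : 0 < lam) (hmu : 0 < mu) (hC : 0 ≤ C) (hM : 0 < M) (hε : 0 < ε)
    (hε1 : (lam + mu) * ε ≤ (mu ^ 2 + lam ^ 2) / 2)
    (hε2 : 2 * (lam + mu) * (C / (mu ^ 2 + lam ^ 2) + 1) * ε < c)
    (hη : |lam * d.1 - mu * d.2| ≤ ε * ‖d‖)
    (hG : c * M ≤ G) (hG' : |G'| ≤ C * M) (hR : |R| ≤ ε * M * ‖d‖)
    (h0 : (mu * d.1 + lam * d.2) / (mu ^ 2 + lam ^ 2) * G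
      + (lam * d.1 - mu * d.2) / (mu ^ 2 + lam ^ 2) * G' + R = 0) : d = 0 := by
  set N := mu ^ 2 + lam ^ 2 with hN
  set k := (mu * d.1 + lam * d.2) / N with hk
  set η := lam * d.1 - mu * d.2 with hηdef
  have hNpos : 0 < N := by positivity
  have hd1 : d.1 = k * mu + η / N * lam := by
    rw [hk, hηdef]; field_simp; rw [hN]; ring
  have hd2 : d.2 = k * lam - η / N * mu := by
    rw [hk, hηdef]; field_simp; rw [hN]; ring
  have hηN : |η / N| ≤ ε * ‖d‖ / N := by
    rw [abs_div, abs_of_pos hNpos]; gcongr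
  have hsize : ‖d‖ ≤ |k| * (lam + mu) + |η / N| * (lam + mu) := by
    rw [Prod.norm_def, Real.norm_eq_abs, Real.norm_eq_abs, hd1, hd2]
    have a1 := abs_nonneg k
    have a2 := abs_nonneg (η / N)
    refine max_le ((abs_add_le _ _).trans ?_) ((abs_sub _ _).trans ?_) <;>
      rw [abs_mul, abs_mul, abs_of_pos hlam, abs_of_pos hmu] <;> nlinarith
  have hhalf : |η / N| * (lam + mu) ≤ ‖d‖ / 2 := by
    calc |η / N| * (lam + mu) ≤ ε * ‖d‖ / N * (lam + mu) := by gcongr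
      _ = (lam + mu) * ε * ‖d‖ / N := by ring
      _ ≤ N / 2 * ‖d‖ / N := by gcongr
      _ = ‖d‖ / 2 := by field_simp
  have hdk : ‖d‖ ≤ 2 * (lam + mu) * |k| := by linarith
  -- The `(mu, lam)` term `k * G` must be cancelled by the other two, which are of order `ε * M`.
  have hcpos : 0 < c := lt_of_le_of_lt (by positivity) hε2
  have hmain : |k| * (c * M) ≤ 2 * (lam + mu) * (C / N + 1) * ε * |k| * M := by
    calc |k| * (c * M) ≤ |k| * G := by gcongr
      _ = |k * G| := by rw [abs_mul, abs_of_nonneg ((by positivity : 0 ≤ c * M).trans hG)]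
      _ = |η / N * G' + R| := by
          rw [show k * G = -(η / N * G' + R) by linarith, abs_neg]
      _ ≤ |η / N| * |G'| + |R| := by rw [← abs_mul]; exact abs_add_le _ _
      _ ≤ ε * ‖d‖ / N * (C * M) + ε * M * ‖d‖ := by gcongr
      _ = (C / N + 1) * ε * M * ‖d‖ := by ring
      _ ≤ (C / N + 1) * ε * M * (2 * (lam + mu) * |k|) := by gcongr
      _ = _ := by ring
  have hk0 : |k| = 0 := by
    by_contra hne
    have : 0 < |k| := lt_of_le_of_ne (abs_nonneg _) (Ne.symm hne)
    have := mul_pos this hM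
    nlinarith
  rw [hk0, mul_zero] at hdk
  exact norm_le_zero_iff.1 hdk

/-! ### Cross products and partial derivatives -/

/-- The Lagrange identity. -/
lemma inner_cross3 (a b c d : E3) :
    ⟪cross3 a b, cross3 c d⟫ = ⟪a, c⟫ * ⟪b, d⟫ - ⟪a, d⟫ * ⟪b, c⟫ := by
  simp [cross3, PiLp.inner_apply, Fin.sum_univ_three, crossProduct]
  ring

lemma inner_left_cross3 (a b : E3) : ⟪a, cross3 a b⟫ = 0 := by
  simp [cross3, PiLp.inner_apply, Fin.sum_univ_three, crossProduct]
  ring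

lemma inner_right_cross3 (a b : E3) : ⟪b, cross3 a b⟫ = 0 := by
  simp [cross3, PiLp.inner_apply, Fin.sum_univ_three, crossProduct]
  ring

/-- Identifies the iterated partial derivatives with values of the second Fréchet derivative. -/
lemma fderiv_fderiv_apply (x : ℝ × ℝ → E3) (hx : ContDiff ℝ 3 x) (v w : ℝ × ℝ) :
    fderiv ℝ (fun p => fderiv ℝ x p v) 0 w = fderiv ℝ (fderiv ℝ x) 0 w v := by
  have hd : DifferentiableAt ℝ (fderiv ℝ x) 0 :=
    (hx.fderiv_right (m := 2) (by norm_num)).differentiable (by norm_num) 0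
  rw [fderiv_clm_apply hd (differentiableAt_const v)]
  simp

/-! ### Injectivity of the projection -/

/-- **Single-sheetedness at a rounded corner.**
If the surface patch `x` has a rounded corner at `(0,0)` with limit normal
`n = (t × r)/‖t × r‖`, then on a sufficiently small square `[0,H']²` the
orthogonal projection `Π(η) = (Id − n nᵀ)(x(η) − x(0,0))` of `x − x(0,0)`
onto the limit tangent space is injective. -/
theorem rounded_corner_projection_injective
    (H : ℝ) (hH : 0 < H) (x : ℝ × ℝ → E3) (hx : ContDiff ℝ 3 x)
    (t : E3) (ht : ‖t‖ = 1) (lam mu : ℝ) (hlam : 0 < lam) (hmu : 0 < mu)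
    (hxi10 : pd1 x (0, 0) = lam • t)
    (hxi01 : pd2 x (0, 0) = -(mu • t))
    (r s : E3)
    (hr : r = mu • pd1 (pd1 x) (0, 0) + lam • pd2 (pd1 x) (0, 0))
    (hs : s = lam • pd2 (pd2 x) (0, 0) + mu • pd2 (pd1 x) (0, 0))
    (hcop : ¬ LinearIndependent ℝ ![r, s, t])
    (hone : 0 < ⟪cross3 t r, cross3 t s⟫)
    (n : E3) (hn : n = ‖cross3 t r‖⁻¹ • cross3 t r) :
    ∃ H' : ℝ, H' ∈ Set.Ioc 0 H ∧
      Set.InjOn (fun η : ℝ × ℝ => (x η - x (0, 0)) - ⟪n, x η - x (0, 0)⟫ • n)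
        (Set.Icc (0 : ℝ) H' ×ˢ Set.Icc (0 : ℝ) H') := by
  set B := fderiv ℝ (fderiv ℝ x) 0 with hB
  have hsymm : ∀ v w, B v w = B w v := by
    have h : IsSymmSndFDerivAt ℝ x 0 := hx.contDiffAt.isSymmSndFDerivAt (by simp; norm_cast)
    exact fun v w => h v w
  replace hr : r = mu • B (1, 0) (1, 0) + lam • B (0, 1) (1, 0) := by
    rw [hr, hB, ← fderiv_fderiv_apply x hx, ← fderiv_fderiv_apply x hx]; rfl
  replace hs : s = lam • B (0, 1) (0, 1) + mu • B (0, 1) (1, 0) := by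
    rw [hs, hB, ← fderiv_fderiv_apply x hx, ← fderiv_fderiv_apply x hx]; rfl
  have hL : ∀ d : ℝ × ℝ, fderiv ℝ x 0 d = (lam * d.1 - mu * d.2) • t := by
    intro d
    have h1 : fderiv ℝ x 0 (1, 0) = lam • t := hxi10
    have h2 : fderiv ℝ x 0 (0, 1) = -(mu • t) := hxi01
    have : d = d.1 • ((1, 0) : ℝ × ℝ) + d.2 • ((0, 1) : ℝ × ℝ) := by ext <;> simp
    conv_lhs => rw [this]
    rw [map_add, map_smul, map_smul, h1, h2]
    module
  have htt : ⟪t, t⟫ = 1 := by rw [real_inner_self_eq_norm_sq, ht]; norm_num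
  set e : E3 := r - ⟪t, r⟫ • t with he
  have het : ⟪e, t⟫ = 0 := by
    rw [he, inner_sub_left, real_inner_smul_left, htt, real_inner_comm]; ring
  have her : 0 < ⟪e, r⟫ := by
    have h1 : cross3 t r ≠ 0 := by rintro h; simp [h] at hone
    have h2 : ⟪e, r⟫ = ⟪cross3 t r, cross3 t r⟫ := by
      rw [he, inner_sub_left, real_inner_smul_left, inner_cross3, htt, real_inner_comm t r]; ring
    rw [h2]
    exact real_inner_self_pos.2 h1
  have hes : 0 < ⟪e, s⟫ := by
    have h2 : ⟪e, s⟫ = ⟪cross3 t r, cross3 t s⟫ := by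
      rw [he, inner_sub_left, real_inner_smul_left, inner_cross3, htt, real_inner_comm t r]; ring
    rwa [h2]
  have htn : ⟪t, n⟫ = 0 := by rw [hn, real_inner_smul_right, inner_left_cross3, mul_zero]
  have hen : ⟪e, n⟫ = 0 := by
    rw [he, inner_sub_left, real_inner_smul_left, htn, hn, real_inner_smul_right,
      inner_right_cross3]; ring
  obtain ⟨c, hc, hcr, hcs⟩ : ∃ c > 0, c ≤ ⟪e, r⟫ / 2 ∧ c ≤ ⟪e, s⟫ / 2 :=
    ⟨min (⟪e, r⟫ / 2) (⟪e, s⟫ / 2), by positivity, min_le_left _ _, min_le_right _ _⟩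
  set C : ℝ := ‖e‖ * (‖B‖ * (lam + mu)) with hC
  have hC0 : 0 ≤ C := by positivity
  obtain ⟨ε, hε, hε1, hε2⟩ : ∃ ε > 0, (lam + mu) * ε ≤ (mu ^ 2 + lam ^ 2) / 2 ∧
      2 * (lam + mu) * (C / (mu ^ 2 + lam ^ 2) + 1) * ε < c := by
    have h1 : ∀ᶠ ε in nhds (0 : ℝ), (lam + mu) * ε < (mu ^ 2 + lam ^ 2) / 2 :=
      (by fun_prop : Continuous fun ε : ℝ => (lam + mu) * ε).continuousAt.eventually_lt
        continuousAt_const (by rw [mul_zero]; positivity)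
    have h2 : ∀ᶠ ε in nhds (0 : ℝ), 2 * (lam + mu) * (C / (mu ^ 2 + lam ^ 2) + 1) * ε < c :=
      (by fun_prop : Continuous fun ε : ℝ =>
        2 * (lam + mu) * (C / (mu ^ 2 + lam ^ 2) + 1) * ε).continuousAt.eventually_lt
        continuousAt_const (by rwa [mul_zero])
    obtain ⟨ε, ⟨h1, h2⟩, h3⟩ :=
      (((h1.and h2).filter_mono nhdsWithin_le_nhds).and
        (self_mem_nhdsWithin : Set.Ioi (0 : ℝ) ∈ nhdsWithin 0 (Set.Ioi 0))).exists
    exact ⟨ε, h3, h1.le, h2⟩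
  -- Dividing by `‖e‖ + 1` turns the remainder bound into one for its `e`-component.
  have hε' : 0 < ε / (‖e‖ + 1) := by positivity
  obtain ⟨δ₁, hδ₁, hquad⟩ := second_order_difference x hx (ε / (‖e‖ + 1)) hε'
  have hstrict : HasStrictFDerivAt x (fderiv ℝ x 0) 0 :=
    hx.contDiffAt.hasStrictFDerivAt (by norm_num)
  obtain ⟨δ₂, hδ₂, hlin⟩ := Metric.eventually_nhds_iff.1 (hstrict.isLittleO.def hε)
  refine ⟨min H (min δ₁ (δ₂ / 2)), ⟨by positivity, min_le_left _ _⟩, ?_⟩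
  rintro p ⟨⟨hp1, hp1'⟩, hp2, hp2'⟩ q ⟨⟨hq1, hq1'⟩, hq2, hq2'⟩ hpq
  set H' := min H (min δ₁ (δ₂ / 2)) with hH'
  have hH1 : H' ≤ δ₁ := (min_le_right _ _).trans (min_le_left _ _)
  have hH2 : H' ≤ δ₂ / 2 := (min_le_right _ _).trans (min_le_right _ _)
  have hpn : ‖p‖ = max p.1 p.2 := by
    rw [Prod.norm_def, Real.norm_of_nonneg hp1, Real.norm_of_nonneg hp2]
  have hqn : ‖q‖ = max q.1 q.2 := by
    rw [Prod.norm_def, Real.norm_of_nonneg hq1, Real.norm_of_nonneg hq2]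
  set M := max ‖p‖ ‖q‖ with hM
  have hMH : M ≤ H' := by
    rw [hM, hpn, hqn]; exact max_le (max_le hp1' hp2') (max_le hq1' hq2')
  have hMsum : M ≤ (p.1 + q.1) + (p.2 + q.2) := by
    rw [hM, hpn, hqn]
    -- Nonnegativity of all the coordinates is used here.
    exact max_le (max_le (by linarith) (by linarith)) (max_le (by linarith) (by linarith))
  have hpM : ‖p‖ ≤ M := le_max_left _ _
  have hqM : ‖q‖ ≤ M := le_max_right _ _
  rcases (le_trans (norm_nonneg p) hpM).eq_or_lt with hM0 | hMpos
  · rw [← hM0] at hpM hqM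
    rw [norm_le_zero_iff.1 hpM, norm_le_zero_iff.1 hqM]
  -- Equal projections make the difference of the two points of the patch a multiple of `n`.
  have hmult : x q - x p = (⟪n, x q - x (0, 0)⟫ - ⟪n, x p - x (0, 0)⟫) • n := by
    simp only at hpq
    rw [sub_smul, ← sub_eq_zero]
    rw [← sub_eq_zero] at hpq
    rw [← neg_eq_zero, ← hpq]
    abel
  have htΔ : ⟪t, x q - x p⟫ = 0 := by rw [hmult, real_inner_smul_right, htn, mul_zero]
  have heΔ : ⟪e, x q - x p⟫ = 0 := by rw [hmult, real_inner_smul_right, hen, mul_zero]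
  set d := q - p with hd
  -- Strict differentiability at the origin bounds the first-order term, as `⟪t, x q - x p⟫ = 0`.
  have hη : |lam * d.1 - mu * d.2| ≤ ε * ‖d‖ := by
    have h := hlin (y := (q, p)) (by
      rw [dist_eq_norm, Prod.norm_def]
      simp only [Prod.fst_sub, Prod.snd_sub, sub_zero]
      exact max_lt (by linarith) (by linarith))
    simp only at h
    have h2 : ⟪t, x q - x p - fderiv ℝ x 0 (q - p)⟫ = -(lam * d.1 - mu * d.2) := by
      rw [inner_sub_right, htΔ, hL, real_inner_smul_right, htt, ← hd]; ring
    rw [← abs_neg, ← h2]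
    refine (abs_real_inner_le_norm _ _).trans ?_
    rw [ht, one_mul]
    exact h
  set R : E3 := x q - x p - fderiv ℝ x 0 (q - p) - (1 / 2 : ℝ) • B (p + q) (q - p) with hRdef
  have hRn : ‖R‖ ≤ ε / (‖e‖ + 1) * M * ‖d‖ := hquad M (hMH.trans hH1) p q hpM hqM
  have hR : |⟪e, R⟫| ≤ ε * M * ‖d‖ := by
    refine (abs_real_inner_le_norm _ _).trans ?_
    calc ‖e‖ * ‖R‖ ≤ (‖e‖ + 1) * (ε / (‖e‖ + 1) * M * ‖d‖) := by gcongr; linarith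
      _ = ε * M * ‖d‖ := by field_simp
  have hpqs : p + q = (p.1 + q.1) • ((1, 0) : ℝ × ℝ) + (p.2 + q.2) • ((0, 1) : ℝ × ℝ) := by
    ext <;> simp
  have hG : (1 / 2 : ℝ) * ⟪e, B (p + q) (mu, lam)⟫
      = (p.1 + q.1) * (⟪e, r⟫ / 2) + (p.2 + q.2) * (⟪e, s⟫ / 2) := by
    have h1 : ((mu, lam) : ℝ × ℝ) = mu • ((1, 0) : ℝ × ℝ) + lam • ((0, 1) : ℝ × ℝ) := by
      ext <;> simp
    rw [hpqs, h1, hr, hs]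
    simp only [map_add, map_smul, add_apply, smul_apply,
      inner_add_right, real_inner_smul_right, hsymm (1, 0) (0, 1)]
    ring
  have hGM : c * M ≤ (1 / 2 : ℝ) * ⟪e, B (p + q) (mu, lam)⟫ := by
    rw [hG]
    calc c * M ≤ c * ((p.1 + q.1) + (p.2 + q.2)) := by gcongr
      _ = (p.1 + q.1) * c + (p.2 + q.2) * c := by ring
      _ ≤ _ := by gcongr
  have hG' : |(1 / 2 : ℝ) * ⟪e, B (p + q) (lam, -mu)⟫| ≤ C * M := by
    have h1 : ‖((lam, -mu) : ℝ × ℝ)‖ ≤ lam + mu := by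
      rw [Prod.norm_def]
      simp only [norm_neg, Real.norm_of_nonneg hlam.le, Real.norm_of_nonneg hmu.le]
      exact max_le (by linarith) (by linarith)
    have h2 : ‖p + q‖ ≤ 2 * M := (norm_add_le _ _).trans (by linarith)
    rw [abs_mul, abs_of_pos (by norm_num : (0 : ℝ) < 1 / 2)]
    calc 1 / 2 * |⟪e, B (p + q) (lam, -mu)⟫|
        ≤ 1 / 2 * (‖e‖ * (‖B‖ * ‖p + q‖ * ‖((lam, -mu) : ℝ × ℝ)‖)) := by
          gcongr
          exact (abs_real_inner_le_norm _ _).trans (by gcongr; exact B.le_opNorm₂ _ _)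
      _ ≤ 1 / 2 * (‖e‖ * (‖B‖ * (2 * M) * (lam + mu))) := by gcongr
      _ = C * M := by rw [hC]; ring
  have hN : mu ^ 2 + lam ^ 2 ≠ 0 := by positivity
  have hdecomp : d = ((mu * d.1 + lam * d.2) / (mu ^ 2 + lam ^ 2)) • ((mu, lam) : ℝ × ℝ)
      + ((lam * d.1 - mu * d.2) / (mu ^ 2 + lam ^ 2)) • ((lam, -mu) : ℝ × ℝ) := by
    ext <;> simp <;> field_simp <;> ring
  have h0 : (mu * d.1 + lam * d.2) / (mu ^ 2 + lam ^ 2)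
        * ((1 / 2 : ℝ) * ⟪e, B (p + q) (mu, lam)⟫)
      + (lam * d.1 - mu * d.2) / (mu ^ 2 + lam ^ 2)
        * ((1 / 2 : ℝ) * ⟪e, B (p + q) (lam, -mu)⟫) + ⟪e, R⟫ = 0 := by
    have h1 : ⟪e, R⟫ = -((1 / 2 : ℝ) * ⟪e, B (p + q) d⟫) := by
      rw [hRdef, inner_sub_right, inner_sub_right, heΔ, hL, real_inner_smul_right, het,
        real_inner_smul_right]
      ring
    have h2 := congrArg (fun w => ⟪e, B (p + q) w⟫) hdecomp
    simp only [map_add, map_smul, inner_add_right, real_inner_smul_right] at h2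
    simp only [map_add] at h1 h2 ⊢
    rw [h1]
    linarith
  have hd0 : d = 0 :=
    eq_zero_of_estimates hlam hmu hC0 hMpos hε hε1 hε2 hη hGM hG' hR h0
  exact (sub_eq_zero.1 hd0).symm
end
end

section
/- Let x be a surface patch with a rounded corner at (0,0). For (u,v) ≠ (0,0) let κ₁(u,v), κ₂(u,v) denote the principal curvatures of x, i.e. the eigenvalues of the shape operator S = G⁻¹B, where G is the first fundamental form and B the second fundamental form of x. Then there exists H' ∈ (0,H] such that for every p ∈ [1,3), the integrals ∫_{[0,H']²} |κ_i(u,v)|^p ‖x_u(u,v) × x_v(u,v)‖ du dv (i = 1,2) are finite; i.e. the principal curvatures lie in L^p with respect to the surface measure for all p < 3. -/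
/-!
Write `ρ = ‖(u, v)‖` and let `n = x_u × x_v` be the non-normalized normal. The curvatures are shown
to be `O(ρ⁻¹)` and the surface element `O(ρ)`, so the integrand is dominated by a multiple of
`ρ ^ (1 - p)`, which is integrable near the origin of the plane when `p < 3`.

By antiparallelism `n` vanishes at the corner, and `n = u (t × r) + v (t × s) + O(ρ²)`
(`fderiv_normal`, `taylor_two`). Onesidedness makes the linear part at least `c ρ` on the quadrant
`u, v ≥ 0` (`quadrant_bound`), so `‖n‖` is of exact order `ρ` there.

Since `det G = ‖n‖²`, a principal curvature `κ` satisfies `‖n‖² κ² - ⟪Q, ν⟫ κ + det B = 0` with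
`Q = g₂₂ x_uu - 2 g₁₂ x_uv + g₁₁ x_vv` (`curvature_eq`). Here `det B` is only bounded, but the middle
coefficient is `O(ρ)`: at the corner `Q = μ r + λ s`, and by coplanarity this vector is orthogonal to
`t × r` and `t × s`, so `⟪Q, n⟫ = O(ρ²)` (`corner_bounds`). A quadratic with leading, middle and
constant coefficients of orders `ρ²`, `ρ` and `1` has roots of order `ρ⁻¹` (`root_bound`).
-/

open scoped RealInnerProductSpace

noncomputable section

/-- The first fundamental form `G` of the surface patch `x`. -/
def firstFF (x : ℝ × ℝ → E3) (p : ℝ × ℝ) : Matrix (Fin 2) (Fin 2) ℝ :=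
  !![⟪pd1 x p, pd1 x p⟫, ⟪pd1 x p, pd2 x p⟫;
     ⟪pd1 x p, pd2 x p⟫, ⟪pd2 x p, pd2 x p⟫]

/-- The second fundamental form `B` of the surface patch `x`. -/
def secondFF (x : ℝ × ℝ → E3) (p : ℝ × ℝ) : Matrix (Fin 2) (Fin 2) ℝ :=
  !![⟪pd1 (pd1 x) p, unitNormal x p⟫, ⟪pd2 (pd1 x) p, unitNormal x p⟫;
     ⟪pd2 (pd1 x) p, unitNormal x p⟫, ⟪pd2 (pd2 x) p, unitNormal x p⟫]

/-- The shape operator `S = G⁻¹ B` of the surface patch `x`. -/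
def shapeOp (x : ℝ × ℝ → E3) (p : ℝ × ℝ) : Matrix (Fin 2) (Fin 2) ℝ :=
  (firstFF x p)⁻¹ * secondFF x p

/-- `κ` is a principal curvature of `x` at `p`: an eigenvalue of the shape operator. -/
def IsPrincipalCurvature (x : ℝ × ℝ → E3) (p : ℝ × ℝ) (κ : ℝ) : Prop :=
  ∃ w : Fin 2 → ℝ, w ≠ 0 ∧ (shapeOp x p).mulVec w = κ • w

open MeasureTheory Asymptotics Filter Topology

/-! ### Cross product identities -/

lemma cross3_apply (a b : E3) :
    cross3 a b = !₂[a 1 * b 2 - a 2 * b 1, a 2 * b 0 - a 0 * b 2, a 0 * b 1 - a 1 * b 0] := by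
  ext i
  fin_cases i <;> simp [cross3, cross_apply]

/-- The cross product as a continuous bilinear map, so that the product rule applies. -/
def crossB : E3 →L[ℝ] E3 →L[ℝ] E3 :=
  (LinearMap.mk₂ ℝ cross3
    (by intro a b c; ext i; fin_cases i <;> simp [cross3_apply] <;> ring)
    (by intro a b c; ext i; fin_cases i <;> simp [cross3_apply] <;> ring)
    (by intro a b c; ext i; fin_cases i <;> simp [cross3_apply] <;> ring)
    (by intro a b c; ext i; fin_cases i <;> simp [cross3_apply] <;> ring)).toContinuousBilinearMap

lemma crossB_apply (a b : E3) : crossB a b = cross3 a b := rfl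

lemma inner_E3 (a b : E3) : ⟪a, b⟫ = a 0 * b 0 + a 1 * b 1 + a 2 * b 2 := by
  simp [PiLp.inner_apply, Fin.sum_univ_three]; ring

/-- Lagrange's identity. -/
lemma norm_cross3_sq (a b : E3) :
    ‖cross3 a b‖ ^ 2 = ⟪a, a⟫ * ⟪b, b⟫ - ⟪a, b⟫ * ⟪a, b⟫ := by
  rw [← real_inner_self_eq_norm_sq]
  simp only [inner_E3, cross3_apply]
  simp
  ring

/-- Coplanarity as the vanishing of a triple product. -/
lemma triple_eq_zero {r s t : E3} (h : ¬ LinearIndependent ℝ ![r, s, t]) :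
    ⟪r, cross3 t s⟫ = 0 := by
  obtain ⟨g, hg, i, hi⟩ := Fintype.not_linearIndependent_iff.1 h
  have e : ∀ k : Fin 3, g 0 * r k + g 1 * s k + g 2 * t k = 0 := fun k => by
    have := congrArg (fun z : E3 => z k) hg
    simpa [Fin.sum_univ_three] using this
  have e0 := e 0
  have e1 := e 1
  have e2 := e 2
  refine (mul_eq_zero.1 (?_ : g i * _ = 0)).resolve_left hi
  simp only [inner_E3, cross3_apply]
  fin_cases i <;> simp [-mul_eq_zero]
  · linear_combination (t 1 * s 2 - t 2 * s 1) * e0 + (t 2 * s 0 - t 0 * s 2) * e1 +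
      (t 0 * s 1 - t 1 * s 0) * e2
  · linear_combination (r 1 * t 2 - r 2 * t 1) * e0 + (r 2 * t 0 - r 0 * t 2) * e1 +
      (r 0 * t 1 - r 1 * t 0) * e2
  · linear_combination (s 1 * r 2 - s 2 * r 1) * e0 + (s 2 * r 0 - s 0 * r 2) * e1 +
      (s 0 * r 1 - s 1 * r 0) * e2

lemma inner_cross3_self_right (t r : E3) : ⟪r, cross3 t r⟫ = 0 := by
  simp only [inner_E3, cross3_apply]
  simp
  ring

/-! ### Analytic estimates -/

/-- Taylor's formula with quadratic remainder. -/
lemma taylor_two {E F : Type*} [NormedAddCommGroup E] [NormedSpace ℝ E] [NormedAddCommGroup F]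
    [NormedSpace ℝ F] {f : E → F} (hf : ContDiff ℝ 2 f) :
    (fun q => f q - f 0 - fderiv ℝ f 0 q) =O[𝓝 0] fun q => ‖q‖ ^ 2 := by
  have h1 : ContDiff ℝ 1 (fderiv ℝ f) := hf.fderiv_right (by norm_num)
  obtain ⟨K, s, hs, hK⟩ := (h1.contDiffAt (x := 0)).exists_lipschitzOnWith
  obtain ⟨ε, hε, hb⟩ := Metric.mem_nhds_iff.1 hs
  refine IsBigO.of_bound K ?_
  filter_upwards [Metric.ball_mem_nhds (0 : E) hε] with q hq
  have hsub : Metric.closedBall (0 : E) ‖q‖ ⊆ s := fun y hy => hb (by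
    simp at hy hq ⊢
    linarith)
  have := (convex_closedBall (0 : E) ‖q‖).norm_image_sub_le_of_norm_hasFDerivWithin_le'
    (f := f) (f' := fderiv ℝ f) (φ := fderiv ℝ f 0) (C := K * ‖q‖) (x := 0) (y := q)
    (fun y _ => ((hf.differentiable (by norm_num)) y).hasFDerivAt.hasFDerivWithinAt)
    (fun y hy => by
      have := hK.norm_sub_le (hsub hy) (hsub (Metric.mem_closedBall_self (norm_nonneg _)))
      refine this.trans ?_
      gcongr
      simpa using hy)
    (Metric.mem_closedBall_self (norm_nonneg _)) (by simp)
  simp only [sub_zero] at this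
  simp only [norm_pow, norm_norm]
  linarith [this]

/-- The singularity `ρ ^ (1 - p)` is integrable at the origin of the plane: its exponent exceeds `-2`. -/
lemma singularity_integrable {p δ : ℝ} (hp3 : p < 3) (hδ : 0 < δ) :
    IntegrableOn (fun q : ℝ × ℝ => ‖q‖ ^ (1 - p)) (Metric.ball 0 δ) := by
  refine (integrableOn_fun_norm_addHaar (E := ℝ × ℝ) volume (f := fun y : ℝ => y ^ (1 - p))).2 ?_
  have h : IntegrableOn (fun y : ℝ => y ^ (2 - p)) (Set.Ioo 0 δ) :=
    (intervalIntegral.integrableOn_Ioo_rpow_iff hδ).2 (by linarith)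
  refine h.congr_fun (fun y hy => ?_) measurableSet_Ioo
  have hy0 : 0 < y := hy.1
  have : (2 - p) = 1 + (1 - p) := by ring
  simp [this, Real.rpow_add hy0]

/-! ### The quadratic equation for the principal curvatures -/

/-- An eigenvalue `κ` of `G⁻¹ B` with `det G ≠ 0` is a root of `det (κ G - B)`. -/
lemma curvature_eq {x : ℝ × ℝ → E3} {q : ℝ × ℝ} {κ : ℝ}
    (hn : cross3 (pd1 x q) (pd2 x q) ≠ 0) (hκ : IsPrincipalCurvature x q κ) :
    κ ^ 2 * ‖cross3 (pd1 x q) (pd2 x q)‖ ^ 2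
      - κ * ⟪⟪pd2 x q, pd2 x q⟫ • pd1 (pd1 x) q - (2 * ⟪pd1 x q, pd2 x q⟫) • pd2 (pd1 x) q
          + ⟪pd1 x q, pd1 x q⟫ • pd2 (pd2 x) q, unitNormal x q⟫
      + (⟪pd1 (pd1 x) q, unitNormal x q⟫ * ⟪pd2 (pd2 x) q, unitNormal x q⟫
          - ⟪pd2 (pd1 x) q, unitNormal x q⟫ ^ 2) = 0 := by
  obtain ⟨w, hw, h⟩ := hκ
  have hdet : (firstFF x q).det = ‖cross3 (pd1 x q) (pd2 x q)‖ ^ 2 := by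
    rw [norm_cross3_sq, firstFF, Matrix.det_fin_two_of]
  have hu : IsUnit (firstFF x q).det := by
    rw [hdet, isUnit_iff_ne_zero]
    exact pow_ne_zero _ (norm_ne_zero_iff.2 hn)
  have h2 : (κ • firstFF x q - secondFF x q).mulVec w = 0 := by
    have h3 := congrArg (firstFF x q).mulVec h
    rw [shapeOp, Matrix.mulVec_mulVec, Matrix.mul_nonsing_inv_cancel_left _ _ hu,
      Matrix.mulVec_smul] at h3
    rw [Matrix.sub_mulVec, Matrix.smul_mulVec, h3, sub_self]
  have h4 := Matrix.exists_mulVec_eq_zero_iff.1 ⟨w, hw, h2⟩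
  rw [norm_cross3_sq]
  simp only [firstFF, secondFF, Matrix.det_fin_two] at h4
  simp at h4
  simp only [inner_add_left, inner_sub_left, inner_smul_left, real_inner_self_eq_norm_sq]
  simp
  linear_combination h4

/-- A root of a quadratic with coefficients of orders `ρ²`, `ρ`, `1` is of order `ρ⁻¹`. -/
lemma root_bound {c C D ρ κ a b d : ℝ} (hc : 0 < c) (hC : 0 ≤ C) (hD : 0 ≤ D) (hρ : 0 < ρ)
    (ha : c * ρ ^ 2 ≤ a) (hb : |b| ≤ C * ρ) (hd : |d| ≤ D)
    (h : κ ^ 2 * a - κ * b + d = 0) : |κ| * ρ ≤ (C + D) / c + 1 := by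
  have h1 : c * (|κ| * ρ) ^ 2 ≤ C * (|κ| * ρ) + D := by
    have e1 : κ ^ 2 * (c * ρ ^ 2) ≤ κ ^ 2 * a := by gcongr
    have e2 : κ * b ≤ |κ| * (C * ρ) := by
      calc κ * b ≤ |κ * b| := le_abs_self _
        _ = |κ| * |b| := abs_mul _ _
        _ ≤ _ := by gcongr
    have e3 := neg_abs_le d
    have e4 := sq_abs κ
    calc c * (|κ| * ρ) ^ 2 = κ ^ 2 * (c * ρ ^ 2) := by rw [← e4]; ring
      _ ≤ |κ| * (C * ρ) + D := by linarith
      _ = _ := by ring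
  have hy : 0 ≤ |κ| * ρ := by positivity
  set y := |κ| * ρ
  rcases le_total y 1 with h2 | h2
  · have : 0 ≤ (C + D) / c := by positivity
    linarith
  · have : y ≤ (C + D) / c := by
      rw [le_div_iff₀ hc]
      nlinarith
    linarith

/-! ### The normal near the corner -/

lemma contDiff_pd1 {x : ℝ × ℝ → E3} {n m : WithTop ℕ∞} (hx : ContDiff ℝ n x) (h : m + 1 ≤ n) :
    ContDiff ℝ m (pd1 x) :=
  (hx.fderiv_right h).clm_apply contDiff_const

lemma contDiff_pd2 {x : ℝ × ℝ → E3} {n m : WithTop ℕ∞} (hx : ContDiff ℝ n x) (h : m + 1 ≤ n) :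
    ContDiff ℝ m (pd2 x) :=
  (hx.fderiv_right h).clm_apply contDiff_const

lemma pd1_pd2_eq {x : ℝ × ℝ → E3} (hx : ContDiff ℝ 2 x) (p : ℝ × ℝ) :
    pd1 (pd2 x) p = pd2 (pd1 x) p := by
  have hd : DifferentiableAt ℝ (fderiv ℝ x) p :=
    (hx.fderiv_right (m := 1) (by norm_num)).differentiable (by norm_num) p
  have h := (hx.contDiffAt (x := p)).isSymmSndFDerivAt (by simp) (1, 0) (0, 1)
  unfold pd1 pd2
  rw [fderiv_clm_apply hd (differentiableAt_const _),
    fderiv_clm_apply hd (differentiableAt_const _)]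
  simpa using h

lemma fderiv_eq_pd (f : ℝ × ℝ → E3) (p q : ℝ × ℝ) :
    fderiv ℝ f p q = q.1 • pd1 f p + q.2 • pd2 f p := by
  have : q = q.1 • ((1 : ℝ), (0 : ℝ)) + q.2 • ((0 : ℝ), (1 : ℝ)) := by ext <;> simp
  conv_lhs => rw [this]
  rw [map_add, map_smul, map_smul]
  rfl

lemma contDiff_normal {x : ℝ × ℝ → E3} (hx : ContDiff ℝ 3 x) :
    ContDiff ℝ 2 fun q => cross3 (pd1 x q) (pd2 x q) := by
  simp only [← crossB_apply]
  exact (crossB.contDiff.comp (contDiff_pd1 hx (by norm_num))).clm_apply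
    (contDiff_pd2 hx (by norm_num))

/-- Derivative at the corner of the non-normalized normal `x_u × x_v`. -/
lemma fderiv_normal {x : ℝ × ℝ → E3} (hx : ContDiff ℝ 3 x) {t r s : E3} {lam mu : ℝ}
    (hxi10 : pd1 x 0 = lam • t) (hxi01 : pd2 x 0 = -(mu • t))
    (hr : r = mu • pd1 (pd1 x) 0 + lam • pd2 (pd1 x) 0)
    (hs : s = lam • pd2 (pd2 x) 0 + mu • pd2 (pd1 x) 0) (q : ℝ × ℝ) :
    fderiv ℝ (fun q => cross3 (pd1 x q) (pd2 x q)) 0 q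
      = q.1 • cross3 t r + q.2 • cross3 t s := by
  have h1 : DifferentiableAt ℝ (pd1 x) 0 :=
    (contDiff_pd1 (m := 2) hx (by norm_num)).differentiable (by norm_num) 0
  have h2 : DifferentiableAt ℝ (pd2 x) 0 :=
    (contDiff_pd2 (m := 2) hx (by norm_num)).differentiable (by norm_num) 0
  have h := (crossB.hasFDerivAt_of_bilinear h1.hasFDerivAt h2.hasFDerivAt).fderiv
  simp only [crossB_apply] at h
  rw [h]
  change crossB (pd1 x 0) (fderiv ℝ (pd2 x) 0 q) + crossB (fderiv ℝ (pd1 x) 0 q) (pd2 x 0) = _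
  rw [fderiv_eq_pd, fderiv_eq_pd, pd1_pd2_eq (hx.of_le (by norm_num)), hxi10, hxi01, hr, hs,
    crossB_apply, crossB_apply]
  ext i
  fin_cases i <;> simp [cross3_apply] <;> ring

/-- Onesidedness makes `u a + v b` comparable with `(u, v)` on the first quadrant. -/
lemma quadrant_bound {a b : E3} (h : 0 < ⟪a, b⟫) :
    ∃ c > 0, ∀ q : ℝ × ℝ, 0 ≤ q.1 → 0 ≤ q.2 → c * ‖q‖ ≤ ‖q.1 • a + q.2 • b‖ := by
  have ha : 0 < ‖a‖ := norm_pos_iff.2 fun h0 => by simp [h0] at h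
  have hb : 0 < ‖b‖ := norm_pos_iff.2 fun h0 => by simp [h0] at h
  refine ⟨min ‖a‖ ‖b‖, lt_min ha hb, fun q h1 h2 => ?_⟩
  have key : ‖q.1 • a + q.2 • b‖ ^ 2
      = (q.1 * ‖a‖) ^ 2 + 2 * (q.1 * q.2 * ⟪a, b⟫) + (q.2 * ‖b‖) ^ 2 := by
    rw [norm_add_sq_real, norm_smul, norm_smul, real_inner_smul_left, real_inner_smul_right,
      Real.norm_of_nonneg h1, Real.norm_of_nonneg h2]
    ring
  have h3 : 0 ≤ q.1 * q.2 * ⟪a, b⟫ := by positivity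
  have hq : ‖q‖ = max q.1 q.2 := by
    rw [Prod.norm_def, Real.norm_of_nonneg h1, Real.norm_of_nonneg h2]
  rw [hq]
  rcases le_total q.1 q.2 with h4 | h4
  · rw [max_eq_right h4]
    calc min ‖a‖ ‖b‖ * q.2 ≤ ‖b‖ * q.2 := by gcongr; exact min_le_right _ _
      _ ≤ _ := abs_le_of_sq_le_sq' (by rw [key]; nlinarith [sq_nonneg (q.1 * ‖a‖)])
        (norm_nonneg _) |>.2
  · rw [max_eq_left h4]
    calc min ‖a‖ ‖b‖ * q.1 ≤ ‖a‖ * q.1 := by gcongr; exact min_le_left _ _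
      _ ≤ _ := abs_le_of_sq_le_sq' (by rw [key]; nlinarith [sq_nonneg (q.2 * ‖b‖)])
        (norm_nonneg _) |>.2

lemma norm_unitNormal_le (x : ℝ × ℝ → E3) (q : ℝ × ℝ) : ‖unitNormal x q‖ ≤ 1 := by
  rw [unitNormal, norm_smul, norm_inv, norm_norm]
  exact inv_mul_le_one

/-- A continuous function is bounded near `0`. -/
lemma bound_const {f : ℝ × ℝ → E3} (hf : Continuous f) :
    ∃ C, 0 < C ∧ ∀ᶠ q in 𝓝 0, ‖f q‖ ≤ C := by
  refine ⟨‖f 0‖ + 1, by positivity, ?_⟩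
  filter_upwards [(hf.norm.tendsto 0).eventually_lt_const (lt_add_one _)] with q hq using hq.le

/-! ### Integrability at the corner -/

/-- Near the corner the surface element is `O(ρ)` and the principal curvatures are `O(ρ⁻¹)`. -/
lemma corner_bounds {x : ℝ × ℝ → E3} (hx : ContDiff ℝ 3 x) {t r s : E3} {lam mu : ℝ}
    (ht : ‖t‖ = 1) (hxi10 : pd1 x 0 = lam • t) (hxi01 : pd2 x 0 = -(mu • t))
    (hr : r = mu • pd1 (pd1 x) 0 + lam • pd2 (pd1 x) 0)
    (hs : s = lam • pd2 (pd2 x) 0 + mu • pd2 (pd1 x) 0)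
    (hcop : ¬ LinearIndependent ℝ ![r, s, t])
    (hone : 0 < ⟪cross3 t r, cross3 t s⟫) :
    ∃ M L : ℝ, 0 ≤ M ∧ 0 ≤ L ∧ ∀ᶠ q in 𝓝 (0 : ℝ × ℝ), 0 ≤ q.1 → 0 ≤ q.2 →
      ‖cross3 (pd1 x q) (pd2 x q)‖ ≤ L * ‖q‖ ∧
      (q ≠ 0 → ∀ κ, IsPrincipalCurvature x q κ → |κ| * ‖q‖ ≤ M) := by
  set n : ℝ × ℝ → E3 := fun q => cross3 (pd1 x q) (pd2 x q) with hn
  set Q : ℝ × ℝ → E3 := fun q =>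
    ⟪pd2 x q, pd2 x q⟫ • pd1 (pd1 x) q - (2 * ⟪pd1 x q, pd2 x q⟫) • pd2 (pd1 x) q
          + ⟪pd1 x q, pd1 x q⟫ • pd2 (pd2 x) q with hQ
  have d1 : ContDiff ℝ 2 (pd1 x) := contDiff_pd1 hx (by norm_num)
  have d2 : ContDiff ℝ 2 (pd2 x) := contDiff_pd2 hx (by norm_num)
  have d11 : ContDiff ℝ 1 (pd1 (pd1 x)) := contDiff_pd1 d1 (by norm_num)
  have d12 : ContDiff ℝ 1 (pd2 (pd1 x)) := contDiff_pd2 d1 (by norm_num)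
  have d22 : ContDiff ℝ 1 (pd2 (pd2 x)) := contDiff_pd2 d2 (by norm_num)
  have e1 : ContDiff ℝ 1 (pd1 x) := d1.of_le (by norm_num)
  have e2 : ContDiff ℝ 1 (pd2 x) := d2.of_le (by norm_num)
  have dn : ContDiff ℝ 2 n := contDiff_normal hx
  have dQ : ContDiff ℝ 1 Q :=
    (((e2.inner ℝ e2).smul d11).sub ((contDiff_const.mul (e1.inner ℝ e2)).smul d12)).add
      ((e1.inner ℝ e1).smul d22)
  have hfn := fderiv_normal hx hxi10 hxi01 hr hs
  rw [← hn] at hfn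
  have htt : ⟪t, t⟫ = 1 := by rw [real_inner_self_eq_norm_sq, ht]; norm_num
  have hn0 : n 0 = 0 := by
    simp only [hn, hxi10, hxi01]
    ext i
    fin_cases i <;> simp [cross3_apply] <;> ring
  -- antiparallelism turns the trace of the adjugate of `G` times `B` into `⟪μ r + λ s, ν⟫`
  have hQ0 : Q 0 = mu • r + lam • s := by
    simp only [hQ, hxi10, hxi01, hr, hs, inner_neg_left, inner_neg_right, real_inner_smul_left,
      real_inner_smul_right, htt]
    module
  have hperp : ∀ q : ℝ × ℝ, ⟪Q 0, q.1 • cross3 t r + q.2 • cross3 t s⟫ = 0 := fun q => by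
    have a1 := triple_eq_zero hcop
    have a2 : ⟪s, cross3 t r⟫ = 0 := by
      rw [← neg_eq_zero, ← a1]
      simp only [inner_E3, cross3_apply]
      simp
      ring
    rw [hQ0]
    simp [inner_add_left, inner_add_right, real_inner_smul_left, real_inner_smul_right, a1, a2,
      inner_cross3_self_right]
  obtain ⟨c, hc, hcq⟩ := quadrant_bound hone
  obtain ⟨K, hK, hKb⟩ := (taylor_two dn).exists_pos
  obtain ⟨L, hL, hLb⟩ := ((dn.differentiable (by norm_num)) 0).isBigO_sub.exists_pos
  obtain ⟨K2, hK2, hK2b⟩ := ((dQ.differentiable (by norm_num)) 0).isBigO_sub.exists_pos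
  obtain ⟨A, hA, hAb⟩ := bound_const d11.continuous
  obtain ⟨B, hB, hBb⟩ := bound_const d12.continuous
  obtain ⟨D, hD, hDb⟩ := bound_const d22.continuous
  set C := (K2 * L + ‖Q 0‖ * K) / (c / 2) with hC
  have hC0 : 0 ≤ C := by positivity
  refine ⟨(C + (A * D + B ^ 2)) / (c / 2) ^ 2 + 1, L, by positivity, hL.le, ?_⟩
  filter_upwards [hKb.bound, hLb.bound, hK2b.bound, hAb, hBb, hDb,
    Metric.ball_mem_nhds (0 : ℝ × ℝ) (show 0 < c / 2 / K by positivity)]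
    with q b1 b2 b3 b4 b5 b6 b7 h1 h2
  simp only [hn0, sub_zero, norm_pow, norm_norm, hfn]
    at b1 b2 b3
  refine ⟨b2, fun hq κ hκ => ?_⟩
  have hρ : 0 < ‖q‖ := norm_pos_iff.2 hq
  have b7' : K * ‖q‖ ≤ c / 2 := by
    have := (lt_div_iff₀ hK).1 (mem_ball_zero_iff.1 b7)
    linarith
  have hlow : c / 2 * ‖q‖ ≤ ‖n q‖ := by
    have a1 := hcq q h1 h2
    have a2 := norm_sub_norm_le (q.1 • cross3 t r + q.2 • cross3 t s) (n q)
    rw [norm_sub_rev] at a2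
    have a3 : K * ‖q‖ ^ 2 ≤ c / 2 * ‖q‖ := by nlinarith
    linarith
  have hnpos : 0 < ‖n q‖ := lt_of_lt_of_le (by positivity) hlow
  have hdot : |⟪Q q, n q⟫| ≤ (K2 * L + ‖Q 0‖ * K) * ‖q‖ ^ 2 := by
    have split : ⟪Q q, n q⟫ = ⟪Q q - Q 0, n q⟫
        + ⟪Q 0, n q - (q.1 • cross3 t r + q.2 • cross3 t s)⟫ := by
      rw [inner_sub_right, hperp, inner_sub_left]
      ring
    calc |⟪Q q, n q⟫| ≤ ‖Q q - Q 0‖ * ‖n q‖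
          + ‖Q 0‖ * ‖n q - (q.1 • cross3 t r + q.2 • cross3 t s)‖ := by
          rw [split]
          exact (abs_add_le _ _).trans
            (add_le_add (abs_real_inner_le_norm _ _) (abs_real_inner_le_norm _ _))
      _ ≤ (K2 * ‖q‖) * (L * ‖q‖) + ‖Q 0‖ * (K * ‖q‖ ^ 2) := by gcongr
      _ = _ := by ring
  have hν := norm_unitNormal_le x q
  have hin : ∀ {y : E3} {Y : ℝ}, ‖y‖ ≤ Y → |⟪y, unitNormal x q⟫| ≤ Y := fun {y Y} hy =>
    (abs_real_inner_le_norm _ _).trans (by nlinarith [norm_nonneg y])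
  refine root_bound (a := ‖n q‖ ^ 2) (b := ⟪Q q, unitNormal x q⟫) (by positivity) hC0
    (by positivity) hρ ?_ ?_ ?_ (curvature_eq (norm_pos_iff.1 hnpos) hκ)
  · rw [← mul_pow]
    gcongr
  · have : unitNormal x q = ‖n q‖⁻¹ • n q := rfl
    rw [this, real_inner_smul_right, abs_mul, abs_inv, abs_norm, inv_mul_le_iff₀ hnpos]
    calc _ ≤ (K2 * L + ‖Q 0‖ * K) * ‖q‖ ^ 2 := hdot
      _ = (c / 2 * ‖q‖) * (C * ‖q‖) := by rw [hC]; field_simp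
      _ ≤ _ := by gcongr
  · refine (abs_sub _ _).trans ?_
    rw [abs_mul, abs_pow]
    gcongr
    · exact hin b4
    · exact hin b6
    · exact hin b5

/-- **Curvature integrability at a rounded corner.**
If the surface patch `x` has a rounded corner at `(0,0)`, then, on a
sufficiently small square `[0,H']²`, any pointwise choice `κ` of principal
curvature (eigenvalue of the shape operator `S = G⁻¹B`) satisfies
`∫_{[0,H']²} |κ|^p dμ < ∞` for every `1 ≤ p < 3`, where
`dμ = ‖x_u × x_v‖ du dv` is the surface measure. -/
theorem rounded_corner_curvature_integrable
    (H : ℝ) (hH : 0 < H) (x : ℝ × ℝ → E3) (hx : ContDiff ℝ 3 x)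
    (t : E3) (ht : ‖t‖ = 1) (lam mu : ℝ) (hlam : 0 < lam) (hmu : 0 < mu)
    (hxi10 : pd1 x (0, 0) = lam • t)
    (hxi01 : pd2 x (0, 0) = -(mu • t))
    (r s : E3)
    (hr : r = mu • pd1 (pd1 x) (0, 0) + lam • pd2 (pd1 x) (0, 0))
    (hs : s = lam • pd2 (pd2 x) (0, 0) + mu • pd2 (pd1 x) (0, 0))
    (hcop : ¬ LinearIndependent ℝ ![r, s, t])
    (hone : 0 < ⟪cross3 t r, cross3 t s⟫) :
    ∃ H' : ℝ, H' ∈ Set.Ioc 0 H ∧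
      ∀ p : ℝ, 1 ≤ p → p < 3 →
        ∀ κ : ℝ × ℝ → ℝ,
          (∀ q ∈ (Set.Icc (0 : ℝ) H' ×ˢ Set.Icc (0 : ℝ) H') \ {(0, 0)},
            IsPrincipalCurvature x q (κ q)) →
          ∫⁻ q in Set.Icc (0 : ℝ) H' ×ˢ Set.Icc (0 : ℝ) H',
            ENNReal.ofReal (|κ q| ^ p * ‖cross3 (pd1 x q) (pd2 x q)‖) < ⊤ := by
  have h00 : ((0 : ℝ), (0 : ℝ)) = 0 := rfl
  rw [h00] at hxi10 hxi01 hr hs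
  simp only [h00]
  obtain ⟨M, L, hM, hL, hb⟩ := corner_bounds hx ht hxi10 hxi01 hr hs hcop hone
  obtain ⟨ε, hε, hball⟩ := Metric.eventually_nhds_iff_ball.1 hb
  refine ⟨min H (ε / 2), ⟨by positivity, min_le_left _ _⟩, fun p hp1 hp3 κ hκ => ?_⟩
  set S := Set.Icc (0 : ℝ) (min H (ε / 2)) ×ˢ Set.Icc (0 : ℝ) (min H (ε / 2)) with hS
  have hSm : MeasurableSet S := measurableSet_Icc.prod measurableSet_Icc
  have hSb : S ⊆ Metric.ball 0 ε := by
    rintro q ⟨⟨h1, h2⟩, h3, h4⟩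
    rw [mem_ball_zero_iff, Prod.norm_def, Real.norm_of_nonneg h1, Real.norm_of_nonneg h3]
    have := min_le_right H (ε / 2)
    exact max_lt (by linarith) (by linarith)
  have hint : IntegrableOn (fun q : ℝ × ℝ => M ^ p * L * ‖q‖ ^ (1 - p)) S :=
    ((singularity_integrable hp3 hε).mono_set hSb).const_mul _
  refine lt_of_le_of_lt (setLIntegral_mono' hSm fun q hq => ENNReal.ofReal_le_ofReal ?_)
    hint.lintegral_lt_top
  obtain ⟨hn, hk⟩ := hball q (hSb hq) hq.1.1 hq.2.1
  have hLn := norm_nonneg (cross3 (pd1 x q) (pd2 x q))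
  by_cases hq0 : q = 0
  · -- at the corner itself the surface element vanishes
    have : ‖cross3 (pd1 x q) (pd2 x q)‖ = 0 := le_antisymm (by simpa [hq0] using hn) hLn
    rw [this, mul_zero]
    positivity
  · have hρ : 0 < ‖q‖ := norm_pos_iff.2 hq0
    have hκq := hk hq0 (κ q) (hκ q ⟨hq, hq0⟩)
    calc |κ q| ^ p * ‖cross3 (pd1 x q) (pd2 x q)‖
        ≤ (M / ‖q‖) ^ p * (L * ‖q‖) := by
          gcongr
          rwa [le_div_iff₀ hρ]
      _ = M ^ p * L * ‖q‖ ^ (1 - p) := by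
          rw [Real.div_rpow hM hρ.le, Real.rpow_sub hρ, Real.rpow_one]
          field_simp
end
end
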